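/- Let β, α ∈ ℝ with β ∈ Ξ ∪ {0}, α ∈ Ξ, β < α, and (β, α) ∩ Ξ = ∅ (so that the open interval (β, α) is a connected component of (0, 1/2) ∖ Ξ). Then α ≤ (4/3)·β. -/

import Mathlib

/-- The set `Ξ` of Head's angles: angles `θ ∈ (0, 1/2]` with `2^k θ ∈ [θ, 1] (mod ℤ)`
for all `k ≥ 0`. -/
def HeadXi : Set ℝ :=
  {θ : ℝ | 0 < θ ∧ θ ≤ 1/2 ∧ ∀ k : ℕ, ∃ n : ℤ, θ ≤ 2 ^ k * θ - n ∧ 2 ^ k * θ - n ≤ 1}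

/-!
The set `Ξ` is closed under halving and contains `1/3`, `3/8` and `1/2`. The consecutive ratios in
`1/3 < 3/8 < 1/2 < 2 * (1/3)` are at most `4/3`, so these points and their iterated halves leave no
gap of ratio larger than `4/3` below `2/3`.
-/

theorem mem_headXi_of_doubling_invariant {θ : ℝ} {S : Set ℝ} (hpos : 0 < θ) (hle : θ ≤ 1 / 2)
    (hθ : θ ∈ S) (hS : S ⊆ Set.Icc θ 1) (hdouble : ∀ x ∈ S, ∃ n : ℤ, 2 * x - n ∈ S) :
    θ ∈ HeadXi := by
  have orbit_mem (k : ℕ) : ∃ n : ℤ, 2 ^ k * θ - n ∈ S := by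
    induction k with
    | zero => exact ⟨0, by simpa using hθ⟩
    | succ k ih =>
      obtain ⟨n, hn⟩ := ih
      obtain ⟨m, hm⟩ := hdouble _ hn
      refine ⟨2 * n + m, ?_⟩
      convert hm using 1
      push_cast
      ring
  exact ⟨hpos, hle, fun k => (orbit_mem k).imp fun _ hn => hS hn⟩

theorem one_third_mem_headXi : (1 / 3 : ℝ) ∈ HeadXi := by
  refine mem_headXi_of_doubling_invariant (S := {1 / 3, 2 / 3}) (by norm_num) (by norm_num)
    (by simp) ?_ ?_
  · rintro x (rfl | rfl) <;> norm_num
  · rintro x (rfl | rfl)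
    · exact ⟨0, by norm_num⟩
    · exact ⟨1, by norm_num⟩

theorem three_eighths_mem_headXi : (3 / 8 : ℝ) ∈ HeadXi := by
  refine mem_headXi_of_doubling_invariant (S := {3 / 8, 3 / 4, 1 / 2, 1}) (by norm_num)
    (by norm_num) (by simp) ?_ ?_
  · rintro x (rfl | rfl | rfl | rfl) <;> norm_num
  · rintro x (rfl | rfl | rfl | rfl)
    · exact ⟨0, by norm_num⟩
    · exact ⟨1, by norm_num⟩
    · exact ⟨0, by norm_num⟩
    · exact ⟨1, by norm_num⟩

theorem one_half_mem_headXi : (1 / 2 : ℝ) ∈ HeadXi := by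
  refine mem_headXi_of_doubling_invariant (S := {1 / 2, 1}) (by norm_num) le_rfl (by simp) ?_ ?_
  · rintro x (rfl | rfl) <;> norm_num
  · rintro x (rfl | rfl)
    · exact ⟨0, by norm_num⟩
    · exact ⟨1, by norm_num⟩

theorem half_mul_mem_headXi {θ : ℝ} (hθ : θ ∈ HeadXi) : 1 / 2 * θ ∈ HeadXi := by
  obtain ⟨hpos, hle, horbit⟩ := hθ
  refine ⟨by linarith, by linarith, fun k => ?_⟩
  cases k with
  | zero => exact ⟨0, by norm_num, by norm_num; linarith⟩
  | succ k =>
    obtain ⟨n, hlower, hupper⟩ := horbit k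
    have hshift : (2 : ℝ) ^ (k + 1) * (1 / 2 * θ) = 2 ^ k * θ := by ring
    exact ⟨n, by linarith, by linarith⟩

theorem half_pow_mul_mem_headXi {θ : ℝ} (hθ : θ ∈ HeadXi) (j : ℕ) :
    (1 / 2) ^ j * θ ∈ HeadXi := by
  induction j with
  | zero => simpa using hθ
  | succ j ih =>
    rw [pow_succ', mul_assoc]
    exact half_mul_mem_headXi ih

theorem exists_mem_headXi_mem_Ico {α : ℝ} (hpos : 0 < α) (hle : α ≤ 2 / 3) :
    ∃ γ ∈ HeadXi, γ ∈ Set.Ico (3 / 4 * α) α := by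
  obtain ⟨j, hlower, hupper⟩ :
      ∃ j : ℕ, (1 / 2 : ℝ) ^ (j + 1) < 3 / 2 * α ∧ 3 / 2 * α ≤ (1 / 2) ^ j :=
    exists_nat_pow_near_of_lt_one (by linarith) (by linarith) (by norm_num) (by norm_num)
  rw [pow_succ] at hlower
  rcases le_or_gt α ((1 / 2) ^ j * (3 / 8)) with hle₁ | hlt₁
  · exact ⟨_, half_pow_mul_mem_headXi one_third_mem_headXi j, by linarith, by linarith⟩
  rcases le_or_gt α ((1 / 2) ^ j * (1 / 2)) with hle₂ | hlt₂
  · exact ⟨_, half_pow_mul_mem_headXi three_eighths_mem_headXi j, by linarith, by linarith⟩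
  · exact ⟨_, half_pow_mul_mem_headXi one_half_mem_headXi j, by linarith, by linarith⟩

theorem headXi_gap_ratio_general {β α : ℝ} (hpos : 0 < α) (hle : α ≤ 2 / 3)
    (hgap : Set.Ioo β α ∩ HeadXi = ∅) : α ≤ 4 / 3 * β := by
  obtain ⟨γ, hγ, hγ_lower, hγ_lt⟩ := exists_mem_headXi_mem_Ico hpos hle
  have hγβ : γ ≤ β := by
    by_contra! hβγ
    exact Set.eq_empty_iff_forall_notMem.mp hgap γ ⟨⟨hβγ, hγ_lt⟩, hγ⟩
  linarith

/-- If `(β, α)` is a connected component of `(0, 1/2) ∖ Ξ`, then `α ≤ (4/3)·β`. -/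
theorem headXi_gap_ratio (β α : ℝ) (hβ : β ∈ HeadXi ∪ {0}) (hα : α ∈ HeadXi)
    (hlt : β < α) (hgap : Set.Ioo β α ∩ HeadXi = ∅) :
    α ≤ (4/3) * β := by
  obtain ⟨hpos, hle, -⟩ := hα
  exact headXi_gap_ratio_general hpos (by linarith) hgap
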